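/- arXiv:1004.5440 — 2 statements merged into one kernel-verified Lean document; each statement's English description precedes it below -/
import Mathlib

section
/- Let p be a prime, q = 1/p, and let n ≥ 1 and μ ≥ 1 be integers. Set k = ⌊n/2⌋, s = ⌊(μ−1)/2⌋, and R = q^{s+1} · ∑_{j=0}^{k−1} (q^μ(1−q^n) − q^{2s+2}(1−q^{2j+1})) · q^{2j} · Π_{2j}(q)·Π_{j+s}(q²) / (Π_j(q²)² · Π_s(q²)). Then Q(n, p^μ) = (q^μ(1−q^n) − R)/(1−q), and R ≥ 0, with R = 0 only when k = 0. -/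
/-- Number of symmetric `n × n` matrices over `ZMod m` with nonzero determinant. -/
noncomputable def Nsym (n m : ℕ) : ℕ :=
  Nat.card {A : Matrix (Fin n) (Fin n) (ZMod m) // A.IsSymm ∧ A.det ≠ 0}

/-- Proportion of symmetric `n × n` matrices over `ZMod m` with nonzero determinant. -/
noncomputable def Psym (n m : ℕ) : ℝ :=
  (Nsym n m : ℝ) / (m : ℝ) ^ (n * (n + 1) / 2)

/-- `Q(n,m) = 1 - P(n,m)`. -/
noncomputable def Qsym (n m : ℕ) : ℝ := 1 - Psym n m

/-- `Π_n(t) = ∏_{j=1}^n (1 - t^j)`. -/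
noncomputable def PiProd (n : ℕ) (t : ℝ) : ℝ :=
  ∏ j ∈ Finset.range n, (1 - t ^ (j + 1))

/-!
Let `A` be a finite local ring with maximal ideal generated by `π` and residue field of size `q⁻¹`,
and condition on the first row of a random symmetric matrix over `A`. If the corner entry is
a unit, completing the square splits it off and leaves a uniform symmetric matrix of size one
less. If the corner is a nonunit but the rest of the row contains a unit, the two span an
invertible symmetric `2 × 2` block, which splits off in the same way. Otherwise the whole row is
divisible by `π`; taking this factor out leaves a matrix whose first column is again either
divisible by `π` or has a unit in the corner. The probability that `π ^ μ` divides the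
determinant therefore satisfies a recurrence in the size `n` and the exponent `μ`, with an
explicit solution.
-/

open Finset Matrix IsLocalRing
open scoped BigOperators

theorem expect_eq_of_forall_notMem_range {G : Type*} [AddCommGroup G] [Fintype G] (φ : G →+ G)
    {F : G → ℝ} {c : ℝ} (hF : ∀ x ∉ φ.range, F x = c) :
    𝔼 x, F x = (1 - 1 / φ.range.index) * c + 1 / φ.range.index * 𝔼 x, F (φ x) := by
  classical
  have hindex : (φ.range.index : ℝ) ≠ 0 := by exact_mod_cast AddSubgroup.FiniteIndex.index_ne_zero
  have hfiber (y : G) (hy : y ∈ univ.image φ) : #{x | φ x = y} = φ.range.index := by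
    rw [AddSubgroup.index_range, Nat.card_eq_fintype_card, Fintype.card_subtype]
    simp only [AddMonoidHom.mem_ker]
    exact AddMonoidHom.card_fiber_eq_of_mem_range φ (by simpa using hy) ⟨0, map_zero φ⟩
  have hoff : ∑ y ∈ univ.image φ, (F y - c) = ∑ y, (F y - c) :=
    sum_subset (subset_univ _) fun y _ hy => sub_eq_zero.2 (hF y (by simpa using hy))
  have hcomp : ∑ x, (F (φ x) - c) = φ.range.index * ∑ y, (F y - c) := by
    rw [sum_comp (fun y => F y - c) φ, ← hoff, mul_sum]
    exact sum_congr rfl fun y hy => by rw [hfiber y hy, nsmul_eq_mul]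
  have hmean : 𝔼 x, F (φ x) - c = φ.range.index * (𝔼 x, F x - c) := by
    rw [← Fintype.expect_const (ι := G) c, ← expect_sub_distrib, ← expect_sub_distrib,
      Fintype.expect_eq_sum_div_card, hcomp, Fintype.expect_eq_sum_div_card, mul_div_assoc]
  field_simp
  linear_combination -hmean

section PrincipalMaximalIdeal

variable {A : Type*} [CommRing A] [IsLocalRing A] [Fintype A] {π : A} {q : ℝ}

theorem expect_eq_of_isUnit (hπ : maximalIdeal A = Ideal.span {π})
    (hq : q = 1 / Nat.card (ResidueField A)) {F : A → ℝ} {c : ℝ} (hF : ∀ a, IsUnit a → F a = c) :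
    𝔼 a, F a = (1 - q) * c + q * 𝔼 a, F (π * a) := by
  have hrange : (AddMonoidHom.mulLeft π).range = (maximalIdeal A).toAddSubgroup := by
    ext x
    simp [hπ, Ideal.mem_span_singleton, dvd_def, eq_comm]
  have hindex : (AddMonoidHom.mulLeft π).range.index = Nat.card (ResidueField A) := by
    rw [hrange]; rfl
  rw [hq, ← hindex]
  refine expect_eq_of_forall_notMem_range (AddMonoidHom.mulLeft π) fun a ha => hF a ?_
  rwa [hrange, Submodule.mem_toAddSubgroup, mem_maximalIdeal, mem_nonunits_iff, not_not] at ha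

theorem expect_eq_of_exists_isUnit {ι : Type*} [Fintype ι] [DecidableEq ι]
    (hπ : maximalIdeal A = Ideal.span {π})
    (hq : q = 1 / Nat.card (ResidueField A)) {F : (ι → A) → ℝ} {c : ℝ}
    (hF : ∀ v i, IsUnit (v i) → F v = c) :
    𝔼 v, F v = (1 - q ^ Fintype.card ι) * c + q ^ Fintype.card ι * 𝔼 v, F (π • v) := by
  have hrange : (DistribSMul.toAddMonoidHom (ι → A) π).range =
      AddSubgroup.pi Set.univ fun _ => (maximalIdeal A).toAddSubgroup := by
    ext v
    simp [hπ, Ideal.mem_span_singleton, dvd_def, AddSubgroup.mem_pi, funext_iff, Classical.skolem,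
      eq_comm]
  have hindex : (DistribSMul.toAddMonoidHom (ι → A) π).range.index =
      Nat.card (ResidueField A) ^ Fintype.card ι := by
    rw [hrange, AddSubgroup.index_pi, prod_const]; rfl
  rw [hq, _root_.one_div_pow, ← Nat.cast_pow, ← hindex]
  refine expect_eq_of_forall_notMem_range (DistribSMul.toAddMonoidHom (ι → A) π) fun v hv => ?_
  obtain ⟨i, hi⟩ : ∃ i, v i ∉ maximalIdeal A := by
    simpa [hrange, AddSubgroup.mem_pi] using hv
  exact hF v i (by simpa using hi)

end PrincipalMaximalIdeal

theorem card_isSymm (A ι : Type*) [Fintype ι] :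
    Nat.card {Z : Matrix ι ι A // Z.IsSymm} =
      Nat.card A ^ (Fintype.card ι * (Fintype.card ι + 1) / 2) := by
  classical
  have e : {Z : Matrix ι ι A // Z.IsSymm} ≃ (Sym2 ι → A) :=
    (Equiv.subtypeEquivRight fun Z => ⟨fun h i j => h.apply j i, fun h =>
      IsSymm.ext fun i j => h j i⟩).trans Sym2.lift
  rw [Nat.card_congr e, Nat.card_fun, Nat.card_eq_fintype_card (α := Sym2 ι), Sym2.card,
    Nat.choose_two_right, Nat.add_sub_cancel, mul_comm]

section SymmExpect

variable {A : Type*} {ι κ : Type*}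

/-- The matrix `Z` bordered by the corner entry `a`, the row `v` and the column `w`. -/
def bordered (a : A) (v w : ι → A) (Z : Matrix ι ι A) : Matrix (Unit ⊕ ι) (Unit ⊕ ι) A :=
  fromBlocks (of fun _ _ => a) (replicateRow Unit v) (replicateCol Unit w) Z

theorem isSymm_bordered (a : A) (v : ι → A) {Z : Matrix ι ι A} (hZ : Z.IsSymm) :
    (bordered a v v Z).IsSymm :=
  IsSymm.fromBlocks rfl rfl hZ

/-- A symmetric matrix is a corner entry, the rest of the first row, and a symmetric block. -/
def symmBorderedEquiv : A × (ι → A) × {Z : Matrix ι ι A // Z.IsSymm} ≃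
    {M : Matrix (Unit ⊕ ι) (Unit ⊕ ι) A // M.IsSymm} where
  toFun x := ⟨bordered x.1 x.2.1 x.2.1 x.2.2, isSymm_bordered _ _ x.2.2.2⟩
  invFun M := ⟨M.1 (.inl ()) (.inl ()), fun i => M.1 (.inl ()) (.inr i), M.1.toBlocks₂₂,
    M.2.submatrix Sum.inr⟩
  left_inv _ := rfl
  right_inv M := by
    ext (i | i) (j | j) <;> simp [bordered, toBlocks₂₂, M.2.apply]

variable [Fintype A] [Fintype ι] [DecidableEq ι] [Fintype κ] [DecidableEq κ]

open scoped Classical in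
/-- The mean of `F` over the symmetric matrices with entries in `A` indexed by `ι`. -/
noncomputable def symmExpect (F : Matrix ι ι A → ℝ) : ℝ :=
  𝔼 Z : {Z : Matrix ι ι A // Z.IsSymm}, F Z

theorem symmExpect_congr {F G : Matrix ι ι A → ℝ} (h : ∀ Z : Matrix ι ι A, Z.IsSymm → F Z = G Z) :
    symmExpect F = symmExpect G :=
  expect_congr rfl fun Z _ => h Z Z.2

theorem symmExpect_const [Nonempty A] (c : ℝ) : symmExpect (fun _ : Matrix ι ι A => c) = c := by
  classical
  have : Nonempty {Z : Matrix ι ι A // Z.IsSymm} := ‹Nonempty A›.map fun a => ⟨of fun _ _ => a, rfl⟩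
  exact Fintype.expect_const c

theorem symmExpect_add (F G : Matrix ι ι A → ℝ) :
    symmExpect (fun Z => F Z + G Z) = symmExpect F + symmExpect G :=
  expect_add_distrib _ _ _

theorem symmExpect_indicator (S : Set (Matrix ι ι A)) :
    symmExpect (S.indicator 1) = Nat.card {Z : Matrix ι ι A // Z.IsSymm ∧ Z ∈ S} /
      (Nat.card A : ℝ) ^ (Fintype.card ι * (Fintype.card ι + 1) / 2) := by
  classical
  have e : {Z : Matrix ι ι A // Z.IsSymm ∧ Z ∈ S} ≃
      {Z : {Z : Matrix ι ι A // Z.IsSymm} // Z.1 ∈ S} :=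
    (Equiv.subtypeSubtypeEquivSubtypeInter _ _).symm
  rw [symmExpect, Fintype.expect_eq_sum_div_card, ← Nat.cast_pow, ← card_isSymm,
    Nat.card_congr e, Nat.card_eq_fintype_card, Nat.card_eq_fintype_card]
  simp [Set.indicator_apply, Fintype.card_subtype]

theorem symmExpect_submatrix (e : ι ≃ κ) (F : Matrix κ κ A → ℝ) :
    symmExpect (fun Z : Matrix ι ι A => F (Z.submatrix e.symm e.symm)) = symmExpect F := by
  classical
  exact Fintype.expect_equiv
    ((reindex e e).subtypeEquiv fun _ => (isSymm_reindex_iff e).symm) _ _ fun _ => rfl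

theorem symmExpect_sub {A : Type*} [AddCommGroup A] [Fintype A] {B : Matrix ι ι A} (hB : B.IsSymm)
    (F : Matrix ι ι A → ℝ) : symmExpect (fun Z => F (Z - B)) = symmExpect F := by
  classical
  exact Fintype.expect_equiv ((Equiv.subRight B).subtypeEquiv fun Z =>
    ⟨fun h => h.sub hB, fun h => by simpa using h.add hB⟩) _ _ fun _ => rfl

theorem symmExpect_unit_sum (F : Matrix (Unit ⊕ ι) (Unit ⊕ ι) A → ℝ) :
    symmExpect F = 𝔼 a, 𝔼 v, symmExpect fun Z => F (bordered a v v Z) := by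
  classical
  simp only [symmExpect]
  rw [← Fintype.expect_equiv symmBorderedEquiv (fun x => F (bordered x.1 x.2.1 x.2.1 x.2.2)) _
    fun _ => rfl, ← univ_product_univ, expect_product]
  exact expect_congr rfl fun a _ => by rw [← univ_product_univ, expect_product]

end SymmExpect

section Det

variable {A : Type*} [CommRing A] {ι κ : Type*} [Fintype ι] [DecidableEq ι] [Fintype κ]
  [DecidableEq κ]

theorem det_bordered_smul_row (c a : A) (v w : ι → A) (Z : Matrix ι ι A) :
    (bordered (c * a) (c • v) w Z).det = c * (bordered a v w Z).det := by
  have h : bordered (c * a) (c • v) w Z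
      = fromBlocks (of fun _ _ : Unit => c) 0 0 1 * bordered a v w Z := by
    rw [bordered, bordered, fromBlocks_multiply]
    congr 1 <;> ext <;> simp [Matrix.mul_apply]
  rw [h, det_mul, det_fromBlocks_zero₂₁]
  simp

theorem det_bordered_swap (a : A) (v w : ι → A) {Z : Matrix ι ι A} (hZ : Z.IsSymm) :
    (bordered a v w Z).det = (bordered a w v Z).det := by
  rw [← det_transpose, bordered, bordered, fromBlocks_transpose, hZ.eq]
  rfl

theorem det_bordered_comp (e : κ ≃ ι) (a : A) (v w : ι → A) (Z : Matrix ι ι A) :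
    (bordered a (v ∘ e) (w ∘ e) (Z.submatrix e e)).det = (bordered a v w Z).det := by
  rw [← det_submatrix_equiv_self ((Equiv.refl Unit).sumCongr e) (bordered a v w Z)]
  congr 1
  ext (i | i) (j | j) <;> rfl

theorem det_bordered_unit (a b c d : A) :
    (bordered a (fun _ : Unit => b) (fun _ => c) (of fun _ _ => d)).det = a * d - b * c := by
  rw [← det_submatrix_equiv_self (finSumFinEquiv.symm.trans
    ((Equiv.ofUnique (Fin 1) Unit).sumCongr (Equiv.ofUnique (Fin 1) Unit)) :
      Fin (1 + 1) ≃ Unit ⊕ Unit), det_fin_two]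
  rfl

variable [Fintype A] {f : A → ℝ}

/-- The mean of `f (det Z)` over the symmetric matrices `Z` with entries in `A` indexed by `ι`. -/
noncomputable def detExpect (ι : Type*) [Fintype ι] [DecidableEq ι] (f : A → ℝ) : ℝ :=
  symmExpect fun Z : Matrix ι ι A => f Z.det

theorem detExpect_congr_index (e : ι ≃ κ) (f : A → ℝ) : detExpect ι f = detExpect κ f := by
  simpa only [detExpect, det_submatrix_equiv_self] using
    symmExpect_submatrix e fun Z : Matrix κ κ A => f Z.det

theorem symmExpect_det_bordered_comp (e : κ ≃ ι) (a : A) (v w : ι → A) (f : A → ℝ) :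
    symmExpect (fun Z => f (bordered a (v ∘ e) (w ∘ e) Z).det) =
      symmExpect fun Z => f (bordered a v w Z).det := by
  rw [← symmExpect_submatrix e.symm]
  simp only [Equiv.symm_symm, det_bordered_comp]

/-- Completing the square: `Z - C * U⁻¹ * B` is uniformly distributed when `Z` is. -/
theorem symmExpect_det_fromBlocks (hf : ∀ (u : Aˣ) x, f (u * x) = f x) {U : Matrix κ κ A}
    (hU : IsUnit U.det) {B : Matrix κ ι A} {C : Matrix ι κ A} (hs : (C * U⁻¹ * B).IsSymm) :
    symmExpect (fun Z => f (fromBlocks U B C Z).det) = detExpect ι f := by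
  let := invertibleOfIsUnitDet U hU
  rw [detExpect, ← symmExpect_sub hs fun Z => f Z.det]
  refine symmExpect_congr fun Z _ => ?_
  rw [det_fromBlocks₁₁, invOf_eq_nonsing_inv]
  exact hf hU.unit _

theorem symmExpect_det_bordered_of_isUnit (hf : ∀ (u : Aˣ) x, f (u * x) = f x) {a : A}
    (ha : IsUnit a) (c : A) (v : ι → A) :
    symmExpect (fun Z => f (bordered a v (c • v) Z).det) = detExpect ι f := by
  refine symmExpect_det_fromBlocks hf (by simpa using ha) ?_
  ext i j
  simp [Matrix.mul_apply, mul_comm, mul_left_comm]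

/-- The corner entry and the unit entry of `v` span an invertible `2 × 2` block. -/
theorem symmExpect_det_bordered_of_isUnit_sub {a : A} {v : Unit ⊕ κ → A}
    (hf : ∀ (u : Aˣ) x, f (u * x) = f x)
    (ha : ∀ c, IsUnit (a * c - v (.inl ()) * v (.inl ()))) :
    symmExpect (fun Z => f (bordered a v v Z).det) = detExpect κ f := by
  have key (c : A) (w : κ → A) :
      symmExpect (fun Z => f (bordered a v v (bordered c w w Z)).det) = detExpect κ f := by
    let b := v (.inl ())
    let U : Matrix (Unit ⊕ Unit) (Unit ⊕ Unit) A := bordered a (fun _ => b) (fun _ => b)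
      (of fun _ _ => c)
    let B : Matrix (Unit ⊕ Unit) κ A := fromRows (replicateRow Unit fun i => v (.inr i))
      (replicateRow Unit w)
    have hUs : U.IsSymm := isSymm_bordered _ _ rfl
    have hU : IsUnit U.det := by
      rw [det_bordered_unit]
      exact ha c
    have hs : (Bᵀ * U⁻¹ * B).IsSymm := by
      rw [IsSymm, transpose_mul, transpose_mul, transpose_transpose, transpose_nonsing_inv,
        hUs.eq, Matrix.mul_assoc]
    rw [← symmExpect_det_fromBlocks hf hU hs]
    refine symmExpect_congr fun Z _ => ?_
    rw [← det_submatrix_equiv_self (Equiv.sumAssoc Unit Unit κ)]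
    congr 2
    ext ((i | i) | i) ((j | j) | j) <;> rfl
  simp only [symmExpect_unit_sum, key, Fintype.expect_const]

theorem detExpect_fin_succ (n : ℕ) (f : A → ℝ) : detExpect (Fin (n + 1)) f =
    𝔼 a, 𝔼 v : Fin n → A, symmExpect fun Z => f (bordered a v v Z).det := by
  rw [detExpect_congr_index ((finSuccEquiv n).trans
    ((Equiv.optionEquivSumPUnit _).trans (Equiv.sumComm _ _))), detExpect, symmExpect_unit_sum]

end Det

section Recurrence

variable {A : Type*} [CommRing A] [IsLocalRing A] [Fintype A] {π : A} {q : ℝ} {f : A → ℝ}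

theorem symmExpect_det_bordered_of_isUnit_apply (hf : ∀ (u : Aˣ) x, f (u * x) = f x) {n : ℕ}
    {a : A} (ha : a ∈ maximalIdeal A) {v : Fin n → A} {i : Fin n} (hv : IsUnit (v i)) :
    symmExpect (fun Z => f (bordered a v v Z).det) = detExpect (Fin (n - 1)) f := by
  obtain _ | n := n
  · exact i.elim0
  let e : Unit ⊕ Fin n ≃ Fin (n + 1) := (Equiv.sumComm _ _).trans
    ((Equiv.optionEquivSumPUnit _).symm.trans (finSuccEquiv' i).symm)
  have he : e (.inl ()) = i := by simp [e]
  rw [← symmExpect_det_bordered_comp e]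
  refine symmExpect_det_bordered_of_isUnit_sub hf fun c => ?_
  rw [Function.comp_apply, he, ← notMem_maximalIdeal,
    Submodule.sub_mem_iff_right _ (Ideal.mul_mem_right _ _ ha), notMem_maximalIdeal]
  exact hv.mul hv

theorem detExpect_succ_row (hπ : maximalIdeal A = Ideal.span {π})
    (hq : q = 1 / Nat.card (ResidueField A)) (hf : ∀ (u : Aˣ) x, f (u * x) = f x) (n : ℕ) :
    detExpect (Fin (n + 1)) f = (1 - q) * detExpect (Fin n) f +
      q * ((1 - q ^ n) * detExpect (Fin (n - 1)) f + q ^ n *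
        𝔼 a, 𝔼 v : Fin n → A, symmExpect fun Z => f (π * (bordered a v (π • v) Z).det)) := by
  have hmem (a : A) : π * a ∈ maximalIdeal A :=
    hπ ▸ Ideal.mul_mem_right _ _ (Ideal.mem_span_singleton_self π)
  have hunit (a : A) (ha : IsUnit a) : (𝔼 v : Fin n → A,
      symmExpect fun Z => f (bordered a v v Z).det) = detExpect (Fin n) f :=
    (expect_congr rfl fun v _ => by
      simpa using symmExpect_det_bordered_of_isUnit hf ha 1 v).trans (Fintype.expect_const _)
  have hnonunit (a : A) : (𝔼 v : Fin n → A,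
      symmExpect fun Z => f (bordered (π * a) v v Z).det) =
      (1 - q ^ n) * detExpect (Fin (n - 1)) f + q ^ n *
        𝔼 v : Fin n → A, symmExpect fun Z => f (π * (bordered a v (π • v) Z).det) := by
    rw [expect_eq_of_exists_isUnit hπ hq fun v i hv =>
      symmExpect_det_bordered_of_isUnit_apply hf (hmem a) hv, Fintype.card_fin]
    simp only [det_bordered_smul_row]
  rw [detExpect_fin_succ, expect_eq_of_isUnit hπ hq hunit]
  simp only [hnonunit, expect_add_distrib, Fintype.expect_const, ← mul_expect]

theorem expect_symmExpect_det_bordered_smul_col (hπ : maximalIdeal A = Ideal.span {π})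
    (hq : q = 1 / Nat.card (ResidueField A)) (hf : ∀ (u : Aˣ) x, f (u * x) = f x) (n : ℕ) :
    (𝔼 a, 𝔼 v : Fin n → A, symmExpect fun Z => f (bordered a v (π • v) Z).det) =
      (1 - q) * detExpect (Fin n) f + q * detExpect (Fin (n + 1)) fun x => f (π * x) := by
  have hunit (a : A) (ha : IsUnit a) : (𝔼 v : Fin n → A,
      symmExpect fun Z => f (bordered a v (π • v) Z).det) = detExpect (Fin n) f :=
    (expect_congr rfl fun v _ =>
      symmExpect_det_bordered_of_isUnit hf ha π v).trans (Fintype.expect_const _)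
  have hnonunit (a : A) (v : Fin n → A) :
      (symmExpect fun Z => f (bordered (π * a) v (π • v) Z).det) =
        symmExpect fun Z => f (π * (bordered a v v Z).det) :=
    symmExpect_congr fun Z hZ => by rw [det_bordered_swap _ _ _ hZ, det_bordered_smul_row]
  rw [expect_eq_of_isUnit hπ hq hunit, detExpect_fin_succ]
  simp only [hnonunit]

theorem detExpect_succ (hπ : maximalIdeal A = Ideal.span {π})
    (hq : q = 1 / Nat.card (ResidueField A)) (hf : ∀ (u : Aˣ) x, f (u * x) = f x) (n : ℕ) :
    detExpect (Fin (n + 1)) f =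
      (1 - q) * detExpect (Fin n) f + q * (1 - q ^ n) * detExpect (Fin (n - 1)) f +
        q ^ (n + 1) * ((1 - q) * detExpect (Fin n) (fun x => f (π * x)) +
          q * detExpect (Fin (n + 1)) fun x => f (π * (π * x))) := by
  rw [detExpect_succ_row hπ hq hf,
    expect_symmExpect_det_bordered_smul_col hπ hq (f := fun x => f (π * x)) fun u x => by
      rw [mul_left_comm, hf]]
  ring

end Recurrence

section ClosedForm

/-- The coefficient of `z ^ s` in `∏_{j<k} (1 - q^(2j+1)) / ∏_{j≤k} (1 - q^(2j+1) z)`, as a power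
series in `z`. -/
def oddCoeff {R : Type*} [CommRing R] (q : R) : ℕ → ℕ → R
  | 0, s => q ^ s
  | k + 1, 0 => (1 - q ^ (2 * k + 1)) * oddCoeff q k 0
  | k + 1, s + 1 => q ^ (2 * k + 3) * oddCoeff q (k + 1) s +
      (1 - q ^ (2 * k + 1)) * oddCoeff q k (s + 1)

theorem oddCoeff_pos {q : ℝ} (h0 : 0 < q) (h1 : q < 1) : ∀ k s, 0 < oddCoeff q k s
  | 0, s => by simpa only [oddCoeff] using pow_pos h0 s
  | k + 1, 0 => by
    rw [oddCoeff]
    exact mul_pos (sub_pos.2 (pow_lt_one₀ h0.le h1 (Nat.succ_ne_zero _)))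
      (oddCoeff_pos h0 h1 k 0)
  | k + 1, s + 1 => by
    rw [oddCoeff]
    exact add_pos (mul_pos (pow_pos h0 _) (oddCoeff_pos h0 h1 (k + 1) s))
      (mul_pos (sub_pos.2 (pow_lt_one₀ h0.le h1 (Nat.succ_ne_zero _)))
        (oddCoeff_pos h0 h1 k (s + 1)))

theorem PiProd_zero (t : ℝ) : PiProd 0 t = 1 := prod_range_zero _

theorem PiProd_succ (n : ℕ) (t : ℝ) : PiProd (n + 1) t = PiProd n t * (1 - t ^ (n + 1)) :=
  prod_range_succ _ _

theorem PiProd_pos {t : ℝ} (h0 : 0 ≤ t) (h1 : t < 1) (n : ℕ) : 0 < PiProd n t :=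
  prod_pos fun j _ => sub_pos.2 (pow_lt_one₀ h0 h1 j.succ_ne_zero)

theorem oddCoeff_mul_PiProd (q : ℝ) : ∀ k s, oddCoeff q k s *
    (PiProd k (q ^ 2) ^ 2 * PiProd s (q ^ 2)) =
      q ^ s * PiProd (2 * k) q * PiProd (k + s) (q ^ 2)
  | 0, s => by simp [oddCoeff, PiProd_zero]
  | k + 1, 0 => by
    have ih := oddCoeff_mul_PiProd q k 0
    simp only [oddCoeff, mul_add, mul_one, PiProd_succ, PiProd_zero, add_zero] at ih ⊢
    linear_combination (1 - q ^ (2 * k + 1)) * (1 - q ^ (2 * k + 2)) ^ 2 * ih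
  | k + 1, s + 1 => by
    have ih₁ := oddCoeff_mul_PiProd q (k + 1) s
    have ih₂ := oddCoeff_mul_PiProd q k (s + 1)
    simp only [oddCoeff, mul_add, mul_one, PiProd_succ, ← add_assoc, add_right_comm k 1 s]
      at ih₁ ih₂ ⊢
    linear_combination q ^ (2 * k + 3) * (1 - (q ^ 2) ^ (s + 1)) * ih₁ +
      (1 - q ^ (2 * k + 1)) * (1 - q ^ (2 * k + 2)) ^ 2 * ih₂

theorem oddCoeff_eq_div {q : ℝ} (h0 : 0 < q) (h1 : q < 1) (k s : ℕ) :
    oddCoeff q k s = q ^ s * PiProd (2 * k) q * PiProd (k + s) (q ^ 2) /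
      (PiProd k (q ^ 2) ^ 2 * PiProd s (q ^ 2)) := by
  have hpos := PiProd_pos (sq_nonneg q) (pow_lt_one₀ h0.le h1 two_ne_zero)
  rw [eq_div_iff (mul_pos (pow_pos (hpos k) 2) (hpos s)).ne', oddCoeff_mul_PiProd]

variable {R : Type*} [CommRing R] (q : R)

/-- The sum `∑_{j<k} q^(2j+1) c(j, s-1)` of the coefficients `c = oddCoeff q`. At `s = 0` the value
`1` is the one for which `oddSum_succ_left_eq_succ_right` still holds. -/
def oddSum (k : ℕ) : ℕ → R
  | 0 => 1
  | s + 1 => ∑ j ∈ range k, q ^ (2 * j + 1) * oddCoeff q j s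

/-- The sum defining `oddSum`, with weights `q^(2s) (1 - q^(2j+1))`. At `s = 0` the value `1 - q` is
the one for which `oddSumWeighted_succ_left_eq_succ_right` still holds. -/
def oddSumWeighted (k : ℕ) : ℕ → R
  | 0 => 1 - q
  | s + 1 => ∑ j ∈ range k,
      q ^ (2 * s + 2) * (1 - q ^ (2 * j + 1)) * (q ^ (2 * j + 1) * oddCoeff q j s)

theorem oddSum_succ_left (k s : ℕ) : oddSum q (k + 1) (s + 1) =
    oddSum q k (s + 1) + q ^ (2 * k + 1) * oddCoeff q k s :=
  sum_range_succ _ _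

theorem oddSumWeighted_succ_left (k s : ℕ) : oddSumWeighted q (k + 1) (s + 1) =
    oddSumWeighted q k (s + 1) +
      q ^ (2 * s + 2) * (1 - q ^ (2 * k + 1)) * (q ^ (2 * k + 1) * oddCoeff q k s) :=
  sum_range_succ _ _

theorem oddSum_succ_left_eq_succ_right (k s : ℕ) :
    oddSum q (k + 1) s = oddSum q k (s + 1) + oddCoeff q k s := by
  induction k with
  | zero => cases s <;> simp [oddSum, oddCoeff, pow_succ']
  | succ k ih =>
    cases s with
    | zero =>
      have := oddSum_succ_left q k 0
      simp only [oddSum, oddCoeff] at *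
      linear_combination ih - this
    | succ s =>
      have h₁ := oddSum_succ_left q (k + 1) s
      have h₂ := oddSum_succ_left q k (s + 1)
      simp only [oddCoeff]
      linear_combination ih + h₁ - h₂

theorem oddSumWeighted_succ_left_eq_succ_right (k s : ℕ) :
    oddSumWeighted q (k + 1) s =
      oddSumWeighted q k (s + 1) + q ^ (2 * s) * (1 - q ^ (2 * k + 1)) * oddCoeff q k s := by
  induction k with
  | zero => cases s <;> simp [oddSumWeighted, oddCoeff, pow_succ', mul_add, mul_assoc]
  | succ k ih =>
    cases s with
    | zero =>
      have := oddSumWeighted_succ_left q k 0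
      simp only [oddSumWeighted, oddCoeff] at *
      linear_combination ih - this
    | succ s =>
      have h₁ := oddSumWeighted_succ_left q (k + 1) s
      have h₂ := oddSumWeighted_succ_left q k (s + 1)
      simp only [oddCoeff]
      linear_combination ih + h₁ - h₂

theorem oddSumWeighted_sub (k s : ℕ) : oddSumWeighted q k s - oddSumWeighted q k (s + 1) =
    q ^ (2 * s) * (1 - q ^ (2 * k + 1)) * (oddSum q k s - oddSum q k (s + 1)) := by
  cases k with
  | zero => cases s <;> simp [oddSumWeighted, oddSum]
  | succ k =>
    linear_combination oddSumWeighted_succ_left_eq_succ_right q k s -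
      oddSumWeighted_succ_left q k s - q ^ (2 * s) * (1 - q ^ (2 * k + 3)) *
        (oddSum_succ_left_eq_succ_right q k s - oddSum_succ_left q k s)

/-- `(1 - q)` times the probability that a symmetric `n × n` determinant is divisible by `π ^ μ`;
for `μ ≥ 1` the argument `(μ + 1) / 2` is the `s + 1` of the final formula. -/
def closedForm (n μ : ℕ) : R :=
  q ^ μ * (1 - q ^ n) * (1 - oddSum q (n / 2) ((μ + 1) / 2)) +
    oddSumWeighted q (n / 2) ((μ + 1) / 2)

theorem closedForm_zero_right (n : ℕ) : closedForm q n 0 = 1 - q := by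
  simp [closedForm, oddSum, oddSumWeighted]

theorem closedForm_even_right (n s : ℕ) : closedForm q n (2 * s) =
    q ^ (2 * s) * (1 - q ^ n) * (1 - oddSum q (n / 2) s) + oddSumWeighted q (n / 2) s := by
  rw [closedForm, show (2 * s + 1) / 2 = s by lia]

theorem closedForm_odd_right (n s : ℕ) : closedForm q n (2 * s + 1) =
    q ^ (2 * s + 1) * (1 - q ^ n) * (1 - oddSum q (n / 2) (s + 1)) +
      oddSumWeighted q (n / 2) (s + 1) := by
  rw [closedForm, show (2 * s + 1 + 1) / 2 = s + 1 by lia]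

theorem closedForm_odd_even (k s : ℕ) : closedForm q (2 * k + 1) (2 * s) =
    q ^ (2 * s) * (1 - q ^ (2 * k + 1)) * (1 - oddSum q k (s + 1)) +
      oddSumWeighted q k (s + 1) := by
  rw [closedForm_even_right, show (2 * k + 1) / 2 = k by lia]
  linear_combination oddSumWeighted_sub q k s

theorem closedForm_zero_left (μ : ℕ) : closedForm q 0 (μ + 1) = 0 := by
  rw [closedForm, show (μ + 1 + 1) / 2 = μ / 2 + 1 by lia]
  simp [oddSumWeighted]

theorem closedForm_one_left (μ : ℕ) : closedForm q 1 μ = q ^ μ * (1 - q) := by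
  rcases μ with _ | μ
  · simp [closedForm_zero_right]
  · rw [closedForm, show (μ + 1 + 1) / 2 = μ / 2 + 1 by lia]
    simp [oddSum, oddSumWeighted]

theorem mul_closedForm_odd_pred (n s : ℕ) : q * closedForm q n (2 * s - 1) =
    q ^ (2 * s) * (1 - q ^ n) * (1 - oddSum q (n / 2) s) + q * oddSumWeighted q (n / 2) s := by
  rcases s with _ | s
  · simp [closedForm, oddSum, oddSumWeighted]
  · rw [show 2 * (s + 1) - 1 = 2 * s + 1 by lia, closedForm_odd_right]
    ring

theorem closedForm_one_succ (μ : ℕ) : closedForm q 1 (μ + 1) =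
    q * ((1 - q) * closedForm q 0 μ + q * closedForm q 1 (μ - 1)) := by
  rcases μ with _ | μ
  · simp only [closedForm_one_left, closedForm_zero_right]
    ring
  · simp only [closedForm_one_left, closedForm_zero_left, Nat.add_sub_cancel]
    ring

theorem closedForm_add_two_odd (n s : ℕ) : closedForm q (n + 2) (2 * s + 1) =
    (1 - q) * closedForm q (n + 1) (2 * s + 1) +
      q * (1 - q ^ (n + 1)) * closedForm q n (2 * s + 1) + q ^ (n + 2) *
        ((1 - q) * closedForm q (n + 1) (2 * s) + q * closedForm q (n + 2) (2 * s - 1)) := by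
  rw [mul_closedForm_odd_pred]
  obtain ⟨k, rfl | rfl⟩ := n.even_or_odd'
  · simp only [closedForm_odd_right, closedForm_odd_even, Nat.mul_add_div two_pos,
      Nat.mul_div_right _ two_pos, Nat.reduceDiv, add_zero, oddSum_succ_left,
      oddSumWeighted_succ_left, oddSum_succ_left_eq_succ_right,
      oddSumWeighted_succ_left_eq_succ_right]
    ring
  · simp only [closedForm_odd_right, closedForm_even_right, add_assoc, Nat.reduceAdd,
      Nat.mul_add_div two_pos, Nat.reduceDiv, add_zero, oddSum_succ_left,
      oddSumWeighted_succ_left, oddSum_succ_left_eq_succ_right,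
      oddSumWeighted_succ_left_eq_succ_right]
    ring

theorem closedForm_add_two_even (n s : ℕ) : closedForm q (n + 2) (2 * s + 2) =
    (1 - q) * closedForm q (n + 1) (2 * s + 2) +
      q * (1 - q ^ (n + 1)) * closedForm q n (2 * s + 2) + q ^ (n + 2) *
        ((1 - q) * closedForm q (n + 1) (2 * s + 1) + q * closedForm q (n + 2) (2 * s)) := by
  obtain ⟨k, rfl | rfl⟩ := n.even_or_odd' <;>
  · simp only [closedForm_odd_right, closedForm_even_right, show 2 * s + 2 = 2 * (s + 1) by ring,
      add_assoc, Nat.reduceAdd, Nat.mul_add_div two_pos, Nat.mul_div_right _ two_pos,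
      Nat.reduceDiv, add_zero, oddSum_succ_left, oddSumWeighted_succ_left,
      oddSum_succ_left_eq_succ_right, oddSumWeighted_succ_left_eq_succ_right]
    ring

theorem closedForm_succ (n μ : ℕ) : closedForm q (n + 1) (μ + 1) =
    (1 - q) * closedForm q n (μ + 1) + q * (1 - q ^ n) * closedForm q (n - 1) (μ + 1) +
      q ^ (n + 1) * ((1 - q) * closedForm q n μ + q * closedForm q (n + 1) (μ - 1)) := by
  rcases n with _ | n
  · rw [closedForm_zero_left, closedForm_one_succ]
    ring
  obtain ⟨s, rfl | rfl⟩ := μ.even_or_odd'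
  · exact closedForm_add_two_odd q n s
  · exact closedForm_add_two_even q n s

theorem closedForm_eq_sub_sum (n : ℕ) {μ : ℕ} (hμ : 1 ≤ μ) :
    closedForm q n μ = q ^ μ * (1 - q ^ n) - ∑ j ∈ range (n / 2),
      (q ^ μ * (1 - q ^ n) - q ^ (2 * ((μ - 1) / 2) + 2) * (1 - q ^ (2 * j + 1))) *
        (q ^ (2 * j + 1) * oddCoeff q j ((μ - 1) / 2)) := by
  rw [closedForm, show (μ + 1) / 2 = (μ - 1) / 2 + 1 by lia, oddSum, oddSumWeighted]
  simp only [sub_mul, sum_sub_distrib, ← mul_sum]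
  ring

end ClosedForm

section DetProb

theorem pow_dvd_of_mul_eq_zero {A : Type*} [CommRing A] [IsLocalRing A] {π : A}
    (hπ : maximalIdeal A = Ideal.span {π}) {z : A} (hz : π * z = 0) :
    ∀ {m : ℕ}, π ^ m ≠ 0 → π ^ m ∣ z
  | 0, _ => by simp
  | m + 1, hm => by
    obtain ⟨w, rfl⟩ := pow_dvd_of_mul_eq_zero hπ hz (left_ne_zero_of_mul (pow_succ π m ▸ hm))
    have hw : ¬ IsUnit w := fun hw => hm <| hw.mul_left_eq_zero.1 <| by
      rw [pow_succ', mul_assoc, hz]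
    rw [← mem_nonunits_iff, ← mem_maximalIdeal, hπ, Ideal.mem_span_singleton] at hw
    rw [pow_succ]
    exact mul_dvd_mul_left _ hw

theorem pow_succ_dvd_mul_iff {A : Type*} [CommRing A] [IsLocalRing A] {π : A}
    (hπ : maximalIdeal A = Ideal.span {π}) {m : ℕ} (hm : π ^ m ≠ 0) (x : A) :
    π ^ (m + 1) ∣ π * x ↔ π ^ m ∣ x := by
  refine ⟨fun ⟨y, hy⟩ => ?_, fun h => pow_succ' π m ▸ mul_dvd_mul_left π h⟩
  have hsub : π * (x - π ^ m * y) = 0 := by rw [mul_sub, hy]; ring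
  exact (dvd_sub_left (dvd_mul_right _ _)).1 (pow_dvd_of_mul_eq_zero hπ hsub hm)

variable {A : Type*} [CommRing A] [Fintype A] {π : A}

/-- The probability that the determinant of a random symmetric `n × n` matrix with entries in `A`
is divisible by `π ^ μ`. -/
noncomputable def symmDetProb (π : A) (n μ : ℕ) : ℝ :=
  detExpect (Fin n) (Set.indicator {x | π ^ μ ∣ x} 1)

theorem symmDetProb_zero_right (π : A) (n : ℕ) : symmDetProb π n 0 = 1 := by
  simp [symmDetProb, detExpect, symmExpect_const]

theorem symmDetProb_zero_left (hπ : ¬ IsUnit π) (μ : ℕ) : symmDetProb π 0 (μ + 1) = 0 := by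
  have h : ¬ π ^ (μ + 1) ∣ 1 := by rwa [← isUnit_iff_dvd_one, isUnit_pow_succ_iff]
  simp [symmDetProb, detExpect, h, symmExpect_const]

theorem symmDetProb_succ [IsLocalRing A] (hπ : maximalIdeal A = Ideal.span {π}) {q : ℝ}
    (hq : q = 1 / Nat.card (ResidueField A)) (n : ℕ) {μ : ℕ} (hμ : π ^ μ ≠ 0) :
    symmDetProb π (n + 1) (μ + 1) =
      (1 - q) * symmDetProb π n (μ + 1) + q * (1 - q ^ n) * symmDetProb π (n - 1) (μ + 1) +
        q ^ (n + 1) * ((1 - q) * symmDetProb π n μ + q * symmDetProb π (n + 1) (μ - 1)) := by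
  have hscale (x : A) : Set.indicator {x | π ^ (μ + 1) ∣ x} (1 : A → ℝ) (π * x) =
      Set.indicator {x | π ^ μ ∣ x} 1 x := by
    classical simp [Set.indicator_apply, pow_succ_dvd_mul_iff hπ hμ]
  have hscale' (x : A) : Set.indicator {x | π ^ μ ∣ x} (1 : A → ℝ) (π * x) =
      Set.indicator {x | π ^ (μ - 1) ∣ x} 1 x := by
    obtain _ | m := μ
    · simp
    · classical simp [Set.indicator_apply,
        pow_succ_dvd_mul_iff hπ (left_ne_zero_of_mul (pow_succ π m ▸ hμ))]
  have hunit (u : Aˣ) (x : A) : Set.indicator {x | π ^ (μ + 1) ∣ x} (1 : A → ℝ) (u * x) =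
      Set.indicator {x | π ^ (μ + 1) ∣ x} 1 x := by
    classical simp [Set.indicator_apply]
  have key := detExpect_succ hπ hq hunit n
  simp only [hscale, hscale'] at key
  exact key

theorem mul_symmDetProb_eq_closedForm [IsLocalRing A] (hπ : maximalIdeal A = Ideal.span {π})
    {q : ℝ} (hq : q = 1 / Nat.card (ResidueField A)) :
    ∀ n μ, π ^ (μ - 1) ≠ 0 →
      (1 - q) * symmDetProb π n μ = closedForm q n μ
  | n, 0, _ => by rw [symmDetProb_zero_right, closedForm_zero_right, mul_one]
  | 0, μ + 1, _ => by
    have hunit : ¬ IsUnit π := by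
      rw [← mem_nonunits_iff, ← mem_maximalIdeal, hπ]
      exact Ideal.mem_span_singleton_self π
    rw [symmDetProb_zero_left hunit, closedForm_zero_left, mul_zero]
  | n + 1, μ + 1, hμ => by
    have hpow {m : ℕ} (hm : m ≤ μ) : π ^ m ≠ 0 := fun h => hμ (pow_eq_zero_of_le hm h)
    rw [symmDetProb_succ hπ hq n (hpow le_rfl), closedForm_succ,
      ← mul_symmDetProb_eq_closedForm hπ hq n (μ + 1) hμ,
      ← mul_symmDetProb_eq_closedForm hπ hq (n - 1) (μ + 1) hμ,
      ← mul_symmDetProb_eq_closedForm hπ hq n μ (hpow (by lia)),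
      ← mul_symmDetProb_eq_closedForm hπ hq (n + 1) (μ - 1) (hpow (by lia))]
    ring
termination_by n μ => n + μ

end DetProb

theorem sub_pow_mul_pos {q : ℝ} (h0 : 0 < q) (h1 : q < 1) {n μ j : ℕ} (hμ : 1 ≤ μ)
    (hj : j < n / 2) :
    0 < q ^ μ * (1 - q ^ n) - q ^ (2 * ((μ - 1) / 2) + 2) * (1 - q ^ (2 * j + 1)) := by
  have hle : q ^ (2 * ((μ - 1) / 2) + 2) ≤ q ^ μ := pow_le_pow_of_le_one h0.le h1.le (by lia)
  have hlt : 1 - q ^ (2 * j + 1) < 1 - q ^ n :=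
    sub_lt_sub_left (pow_lt_pow_right_of_lt_one₀ h0 h1 (by lia)) 1
  have hpos : 0 < 1 - q ^ (2 * j + 1) := sub_pos.2 (pow_lt_one₀ h0.le h1 (Nat.succ_ne_zero _))
  exact sub_pos.2 (mul_lt_mul' hle hlt hpos.le (pow_pos h0 μ))

theorem one_div_card_residueField_mem_Ioo (A : Type*) [CommRing A] [IsLocalRing A] [Finite A] :
    (1 / Nat.card (ResidueField A) : ℝ) ∈ Set.Ioo 0 1 := by
  have : Finite (ResidueField A) := .of_surjective _ (residue_surjective (R := A))
  have hcard : (1 : ℝ) < Nat.card (ResidueField A) := by exact_mod_cast Finite.one_lt_card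
  rw [one_div]
  exact ⟨inv_pos.2 (zero_lt_one.trans hcard), inv_lt_one_of_one_lt₀ hcard⟩

theorem Qsym_explicit_general {A : Type*} [CommRing A] [IsLocalRing A] [Fintype A] {π : A}
    (hπ : maximalIdeal A = Ideal.span {π}) {q : ℝ} (hq : q = 1 / Nat.card (ResidueField A))
    {n μ : ℕ} (hμ : 1 ≤ μ) (hπμ : π ^ (μ - 1) ≠ 0) {k s : ℕ} (hk : k = n / 2)
    (hs : s = (μ - 1) / 2) {R : ℝ}
    (hR : R = q ^ (s + 1) * ∑ j ∈ Finset.range k,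
      (q ^ μ * (1 - q ^ n) - q ^ (2 * s + 2) * (1 - q ^ (2 * j + 1))) * q ^ (2 * j) *
        PiProd (2 * j) q * PiProd (j + s) (q ^ 2) /
          (PiProd j (q ^ 2) ^ 2 * PiProd s (q ^ 2))) :
    symmDetProb π n μ = (q ^ μ * (1 - q ^ n) - R) / (1 - q) ∧ 0 ≤ R ∧ (R = 0 → k = 0) := by
  obtain ⟨h0, h1⟩ := one_div_card_residueField_mem_Ioo A
  rw [← hq] at h0 h1
  have hsum : R = ∑ j ∈ range k,
      (q ^ μ * (1 - q ^ n) - q ^ (2 * s + 2) * (1 - q ^ (2 * j + 1))) *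
        (q ^ (2 * j + 1) * oddCoeff q j s) := by
    rw [hR, mul_sum]
    refine sum_congr rfl fun j _ => ?_
    rw [oddCoeff_eq_div h0 h1]
    ring
  have hterm (j : ℕ) (hj : j ∈ range k) :
      0 < (q ^ μ * (1 - q ^ n) - q ^ (2 * s + 2) * (1 - q ^ (2 * j + 1))) *
        (q ^ (2 * j + 1) * oddCoeff q j s) := by
    rw [hk, mem_range] at hj
    rw [hs]
    exact mul_pos (sub_pow_mul_pos h0 h1 hμ hj) (mul_pos (pow_pos h0 _) (oddCoeff_pos h0 h1 j _))
  refine ⟨?_, ?_, fun h => ?_⟩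
  · rw [eq_div_iff (sub_pos.2 h1).ne', mul_comm, mul_symmDetProb_eq_closedForm hπ hq n μ hπμ,
      closedForm_eq_sub_sum q n hμ, hsum, hk, hs]
  · rw [hsum]
    exact sum_nonneg fun j hj => (hterm j hj).le
  · by_contra hk0
    exact (sum_pos hterm ⟨0, mem_range.2 (Nat.pos_of_ne_zero hk0)⟩).ne' (hsum ▸ h)

theorem Psym_eq_symmExpect (n m : ℕ) [NeZero m] : Psym n m =
    symmExpect (Set.indicator {Z : Matrix (Fin n) (Fin n) (ZMod m) | Z.det ≠ 0} 1) := by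
  rw [symmExpect_indicator, Nat.card_zmod, Fintype.card_fin]
  rfl

theorem Qsym_eq_detExpect (n m : ℕ) [NeZero m] :
    Qsym n m = detExpect (Fin n) (Set.indicator {(0 : ZMod m)} 1) := by
  rw [Qsym, Psym_eq_symmExpect, sub_eq_iff_eq_add, detExpect, ← symmExpect_add,
    ← symmExpect_const (A := ZMod m) (ι := Fin n) 1]
  refine symmExpect_congr fun Z _ => ?_
  by_cases h : Z.det = 0 <;> simp [h]

section ZModPrimePow

variable (p μ : ℕ) [Fact p.Prime] [NeZero μ]

theorem isLocalHom_castHom_pow :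
    IsLocalHom (ZMod.castHom (dvd_pow_self p (NeZero.ne μ)) (ZMod p)) where
  map_nonunit a ha := by
    obtain ⟨a, rfl⟩ := ZMod.natCast_zmod_surjective a
    rw [map_natCast, isUnit_iff_ne_zero, Ne, ZMod.natCast_eq_zero_iff] at ha
    exact (ZMod.isUnit_natCast_iff_not_dvd_pow Fact.out (NeZero.pos μ)).2 ha

instance isLocalRing_zmod_pow : IsLocalRing (ZMod (p ^ μ)) :=
  have := isLocalHom_castHom_pow p μ
  (ZMod.castHom (dvd_pow_self p (NeZero.ne μ)) (ZMod p)).domain_isLocalRing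

theorem ker_castHom_pow :
    RingHom.ker (ZMod.castHom (dvd_pow_self p (NeZero.ne μ)) (ZMod p)) =
      maximalIdeal (ZMod (p ^ μ)) :=
  IsLocalRing.ker_eq_maximalIdeal _ (ZMod.castHom_surjective _)

theorem maximalIdeal_zmod_pow :
    maximalIdeal (ZMod (p ^ μ)) = Ideal.span {(p : ZMod (p ^ μ))} := by
  rw [← ker_castHom_pow]
  refine le_antisymm (fun a ha => ?_) ?_
  · obtain ⟨a, rfl⟩ := ZMod.natCast_zmod_surjective a
    rw [RingHom.mem_ker, map_natCast, ZMod.natCast_eq_zero_iff] at ha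
    exact Ideal.mem_span_singleton.2 (Nat.cast_dvd_cast ha)
  · rw [Ideal.span_singleton_le_iff_mem, RingHom.mem_ker, map_natCast, CharP.cast_eq_zero]

theorem card_residueField_zmod_pow : Nat.card (ResidueField (ZMod (p ^ μ))) = p := by
  rw [ResidueField, ← ker_castHom_pow, Nat.card_congr (RingHom.quotientKerEquivOfSurjective
    (ZMod.castHom_surjective (dvd_pow_self p (NeZero.ne μ)))).toEquiv, Nat.card_zmod]

theorem natCast_pow_sub_one_ne_zero : (p : ZMod (p ^ μ)) ^ (μ - 1) ≠ 0 := by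
  rw [← Nat.cast_pow, Ne, ZMod.natCast_eq_zero_iff,
    Nat.pow_dvd_pow_iff_le_right (Fact.out : p.Prime).one_lt]
  have := NeZero.pos μ
  lia

end ZModPrimePow

theorem Qsym_pow (p n μ : ℕ) [NeZero p] :
    Qsym n (p ^ μ) = symmDetProb (p : ZMod (p ^ μ)) n μ := by
  rw [Qsym_eq_detExpect, symmDetProb, ← Nat.cast_pow, CharP.cast_eq_zero]
  simp only [zero_dvd_iff, Set.ofPred_eq_eq_singleton]

theorem Qsym_explicit (p : ℕ) (hp : p.Prime) (q : ℝ) (hq : q = 1 / p)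
    (n μ : ℕ) (hn : 1 ≤ n) (hμ : 1 ≤ μ) (k s : ℕ) (hk : k = n / 2)
    (hs : s = (μ - 1) / 2) (R : ℝ)
    (hR : R = q ^ (s + 1) * ∑ j ∈ Finset.range k,
      (q ^ μ * (1 - q ^ n) - q ^ (2 * s + 2) * (1 - q ^ (2 * j + 1))) * q ^ (2 * j) *
        PiProd (2 * j) q * PiProd (j + s) (q ^ 2) /
          (PiProd j (q ^ 2) ^ 2 * PiProd s (q ^ 2))) :
    Qsym n (p ^ μ) = (q ^ μ * (1 - q ^ n) - R) / (1 - q) ∧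
      0 ≤ R ∧ (R = 0 → k = 0) := by
  have : Fact p.Prime := ⟨hp⟩
  have : NeZero μ := ⟨by lia⟩
  rw [Qsym_pow]
  exact Qsym_explicit_general (maximalIdeal_zmod_pow p μ)
    (by rw [card_residueField_zmod_pow, hq]) hμ (natCast_pow_sub_one_ne_zero p μ) hk hs hR
end

section
/- Let p be a prime and let n ≥ 0 and μ ≥ 0 be integers. Then P(n+1, p^μ) ≤ P(n, p^μ) ≤ P(n, p^{μ+1}). -/
/-!
Let `I` be an ideal of a finite ring `R` whose complement consists of units, let `q = |I| / |R|`,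
and let `b(n, r)` be the density of nonzero determinants among symmetric matrices of size `r + n`
whose leading `r × r` block has entries in `I`. Look at the row of an index outside the block: if
it has an entry outside `I` in a column of the block, pivot on the corresponding `2 × 2` minor; if
not, but its diagonal entry is a unit, pivot on that entry; otherwise the index joins the block.
Taking Schur complements,
`b(n+1, r) = (1 - q^r) b(n, r-1) + (q^r - q^(r+1)) b(n, r) + q^(r+1) b(n, r+1)`.
If `b(0, ·)` is antitone, so is every `b(n, ·)`, and then `b(n+1, 0) ≤ b(n, 0)`.

For `I = (a)`, a matrix counted by `b(0, r)` is `a` times a symmetric matrix, so `b(0, r)` is the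
density of nonzero determinants in size `r` over `R / ann(a^r)`. If `a` is nilpotent, induction on
its nilpotency index shows that `b(0, ·)` is antitone: passing from `r` to `r + 1` increases the
size over `R / ann(a^(r+1))`, where the index is smaller, and replaces the ring by a quotient, which
can only make more determinants vanish.
-/

open Set Matrix

section Proportion

variable {α β : Type*}

/-- The proportion of the elements of a finite set `s` that lie in `t`; it is `0` if `s` is
empty. -/
noncomputable def proportion (s t : Set α) : ℝ := (s ∩ t).ncard / s.ncard

theorem proportion_nonneg (s t : Set α) : 0 ≤ proportion s t := by
  unfold proportion
  positivity

theorem proportion_le_one [Finite α] (s t : Set α) : proportion s t ≤ 1 :=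
  div_le_one_of_le₀ (by exact_mod_cast ncard_le_ncard inter_subset_left) (Nat.cast_nonneg _)

theorem proportion_mul_ncard [Finite α] (s t : Set α) :
    proportion s t * s.ncard = (s ∩ t).ncard := by
  rcases s.eq_empty_or_nonempty with rfl | hs
  · simp
  · exact div_mul_cancel₀ _ (by exact_mod_cast hs.ncard_pos.ne')

theorem proportion_mono [Finite α] (s : Set α) {t t' : Set α} (h : t ⊆ t') :
    proportion s t ≤ proportion s t' := by
  unfold proportion
  gcongr
  exact s.toFinite.inter_of_left t'

theorem proportion_eq_of_bijOn {s t : Set α} {s' t' : Set β} {f : α → β} (hf : BijOn f s s')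
    (ht : ∀ x ∈ s, f x ∈ t' ↔ x ∈ t) : proportion s t = proportion s' t' := by
  have hst : BijOn f (s ∩ t) (s' ∩ t') := by
    refine ⟨fun x hx => ⟨hf.mapsTo hx.1, (ht x hx.1).2 hx.2⟩, hf.injOn.mono inter_subset_left, ?_⟩
    rintro y ⟨hy, hyt⟩
    obtain ⟨x, hx, rfl⟩ := hf.surjOn hy
    exact ⟨x, ⟨hx, (ht x hx).1 hyt⟩, rfl⟩
  rw [proportion, proportion, hf.ncard_eq, hst.ncard_eq]

theorem ncard_eq_sum_ncard_fiber [Finite α] [Fintype β] (s : Set α) (f : α → β) :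
    s.ncard = ∑ b, {x ∈ s | f x = b}.ncard := by
  classical
  have := Fintype.ofFinite α
  simp only [ncard_eq_toFinset_card']
  rw [Finset.card_eq_sum_card_fiberwise (f := f) (t := Finset.univ) fun _ _ => by simp]
  refine Finset.sum_congr rfl fun b _ => congrArg Finset.card ?_
  ext x
  simp

theorem ncard_inter_eq_mul_of_fibers [Finite α] [Finite β] {s t : Set α} {c : ℝ} (f : α → β)
    (h : ∀ x ∈ s, proportion {y ∈ s | f y = f x} t = c) :
    ((s ∩ t).ncard : ℝ) = c * s.ncard := by
  have := Fintype.ofFinite β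
  rw [ncard_eq_sum_ncard_fiber (s ∩ t) f, ncard_eq_sum_ncard_fiber s f]
  push_cast
  rw [Finset.mul_sum]
  refine Finset.sum_congr rfl fun b _ => ?_
  have hinter : {x ∈ s ∩ t | f x = b} = {x ∈ s | f x = b} ∩ t := by grind
  rw [hinter, ← proportion_mul_ncard]
  rcases {x ∈ s | f x = b}.eq_empty_or_nonempty with hb | ⟨x, hx, rfl⟩
  · simp [hb]
  · rw [h x hx]

theorem proportion_eq_of_fibers [Finite α] [Finite β] {s t : Set α} {c : ℝ} (hs : s.Nonempty)
    (f : α → β) (h : ∀ x ∈ s, proportion {y ∈ s | f y = f x} t = c) : proportion s t = c := by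
  rw [proportion, ncard_inter_eq_mul_of_fibers f h, mul_div_cancel_right₀]
  exact_mod_cast hs.ncard_pos.ne'

theorem proportion_eq_add_of_subset [Finite α] {s t u v : Set α} {c d : ℝ} (hs : s.Nonempty)
    (hvu : v ⊆ u) (hc : ((s \ u ∩ t).ncard : ℝ) = c * (s \ u).ncard)
    (hd : (((s ∩ u) \ v ∩ t).ncard : ℝ) = d * ((s ∩ u) \ v).ncard) :
    proportion s t = (1 - proportion s u) * c + (proportion s u - proportion s v) * d +
      proportion s v * proportion (s ∩ v) t := by
  have hsplit (a b : Set α) : ((a ∩ b).ncard : ℝ) + (a \ b).ncard = a.ncard := by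
    exact_mod_cast ncard_inter_add_ncard_sdiff_eq_ncard a b
  have hs0 : (s.ncard : ℝ) ≠ 0 := by exact_mod_cast hs.ncard_pos.ne'
  have hsv := hsplit (s ∩ u) v
  have htv := hsplit (s ∩ u ∩ t) v
  have htu := hsplit (s ∩ t) u
  have hv := proportion_mul_ncard (s ∩ v) t
  rw [inter_assoc s u v, inter_eq_right.2 hvu] at hsv
  rw [show s ∩ u ∩ t ∩ v = s ∩ v ∩ t by grind,
    show (s ∩ u ∩ t) \ v = (s ∩ u) \ v ∩ t by grind] at htv
  rw [show s ∩ t ∩ u = s ∩ u ∩ t by grind, show (s ∩ t) \ u = s \ u ∩ t by grind] at htu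
  have hu' := proportion_mul_ncard s u
  have hv' := proportion_mul_ncard s v
  apply mul_right_cancel₀ hs0
  calc proportion s t * s.ncard
      = (s \ u ∩ t).ncard + ((s ∩ u) \ v ∩ t).ncard + (s ∩ v ∩ t).ncard := by
        linear_combination proportion_mul_ncard s t - htu - htv
    _ = c * (s \ u).ncard + d * ((s ∩ u) \ v).ncard + proportion (s ∩ v) t * (s ∩ v).ncard := by
        rw [hc, hd, hv]
    _ = _ := by
        linear_combination c * (hsplit s u + hu') + d * (hsv - hu' + hv') -
          proportion (s ∩ v) t * hv'

theorem proportion_eq_add_of_fibers [Finite α] [Finite β] {s t : Set α} {u v : Set β} {c d : ℝ}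
    (hs : s.Nonempty) (f : α → β) (hvu : v ⊆ u)
    (hc : ∀ x ∈ s, f x ∉ u → proportion {y ∈ s | f y = f x} t = c)
    (hd : ∀ x ∈ s, f x ∈ u → f x ∉ v → proportion {y ∈ s | f y = f x} t = d) :
    proportion s t = (1 - proportion s (f ⁻¹' u)) * c +
      (proportion s (f ⁻¹' u) - proportion s (f ⁻¹' v)) * d +
      proportion s (f ⁻¹' v) * proportion (s ∩ f ⁻¹' v) t := by
  have hc' : (((s \ f ⁻¹' u) ∩ t).ncard : ℝ) = c * (s \ f ⁻¹' u).ncard := by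
    refine ncard_inter_eq_mul_of_fibers f fun x hx => ?_
    rw [← hc x hx.1 hx.2]
    congr 1
    grind
  have hd' : ((((s ∩ f ⁻¹' u) \ f ⁻¹' v) ∩ t).ncard : ℝ) =
      d * ((s ∩ f ⁻¹' u) \ f ⁻¹' v).ncard := by
    refine ncard_inter_eq_mul_of_fibers f fun x hx => ?_
    rw [← hd x hx.1.1 hx.1.2 hx.2]
    congr 1
    grind
  exact proportion_eq_add_of_subset hs (preimage_mono hvu) hc' hd'

end Proportion

section AddMonoidHom

variable {A B : Type*} [AddCommGroup A] [AddCommGroup B] [Finite A] [Finite B]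

theorem ncard_coe_inter_preimage (G : AddSubgroup A) (φ : A →+ B) (t : Set B) :
    (↑G ∩ φ ⁻¹' t : Set A).ncard = (↑(G.map φ) ∩ t : Set B).ncard * (G ∩ φ.ker : Set A).ncard := by
  classical
  have := Fintype.ofFinite B
  have hfiber (b : B) : {x ∈ ↑G ∩ φ ⁻¹' t | φ x = b}.ncard =
      if b ∈ (↑(G.map φ) ∩ t : Set B) then (G ∩ φ.ker : Set A).ncard else 0 := by
    split_ifs with hb
    · obtain ⟨⟨g, hg, rfl⟩, hgt⟩ := hb
      refine (BijOn.ncard_eq (f := (g + ·)) ⟨?_, (add_right_injective g).injOn, ?_⟩).symm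
      · rintro x ⟨hx, hx0⟩
        have hφ : φ (g + x) = φ g := by rw [map_add, φ.mem_ker.1 hx0, add_zero]
        exact ⟨⟨G.add_mem hg hx, by rwa [mem_preimage, hφ]⟩, hφ⟩
      · rintro x ⟨⟨hx, -⟩, hφ⟩
        refine ⟨-g + x, ⟨G.add_mem (G.neg_mem hg) hx, ?_⟩, add_neg_cancel_left g x⟩
        simp [AddMonoidHom.mem_ker, hφ]
    · rw [ncard_eq_zero, eq_empty_iff_forall_notMem]
      rintro x ⟨⟨hx, hxt⟩, rfl⟩
      exact hb ⟨⟨x, hx, rfl⟩, hxt⟩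
  rw [ncard_eq_sum_ncard_fiber _ φ, ncard_eq_toFinset_card', ← smul_eq_mul, ← Finset.sum_const]
  simp only [hfiber, ← Finset.sum_filter]
  refine Finset.sum_congr ?_ fun _ _ => rfl
  ext b
  rw [mem_toFinset, Finset.mem_filter_univ]

theorem proportion_preimage (G : AddSubgroup A) (φ : A →+ B) (t : Set B) :
    proportion (G : Set A) (φ ⁻¹' t) = proportion (G.map φ : Set B) t := by
  have huniv := ncard_coe_inter_preimage G φ univ
  rw [preimage_univ, inter_univ, inter_univ] at huniv
  have hker : ((G ∩ φ.ker : Set A).ncard : ℝ) ≠ 0 := by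
    exact_mod_cast (ZeroMemClass.coe_nonempty (G ⊓ φ.ker)).ncard_pos.ne'
  rw [proportion, proportion, ncard_coe_inter_preimage, huniv]
  push_cast
  exact mul_div_mul_right _ _ hker

end AddMonoidHom

section BlockSymm

variable {R ι κ δ : Type*} [CommRing R]

/-- The additive group of symmetric matrices whose entries with both indices in `S` lie in `I`. -/
def blockSymm (I : Ideal R) (S : Set ι) : AddSubgroup (Matrix ι ι R) where
  carrier := {M | M.IsSymm ∧ ∀ i ∈ S, ∀ j ∈ S, M i j ∈ I}
  zero_mem' := ⟨isSymm_zero, fun _ _ _ _ => I.zero_mem⟩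
  add_mem' hM hN :=
    ⟨hM.1.add hN.1, fun i hi j hj => I.add_mem (hM.2 i hi j hj) (hN.2 i hi j hj)⟩
  neg_mem' hM := ⟨hM.1.neg, fun i hi j hj => I.neg_mem (hM.2 i hi j hj)⟩

theorem coe_blockSymm_empty (I : Ideal R) :
    (blockSymm I (∅ : Set ι) : Set (Matrix ι ι R)) = {M | M.IsSymm} := by
  ext M
  exact ⟨fun hM => hM.1, fun hM => ⟨hM, fun _ hi => hi.elim⟩⟩

theorem bijOn_submatrix_blockSymm (e : κ ≃ ι) (I : Ideal R) (S : Set ι) :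
    BijOn (fun M : Matrix ι ι R => M.submatrix e e) (blockSymm I S) (blockSymm I (e ⁻¹' S)) := by
  refine InvOn.bijOn (f' := fun M => M.submatrix e.symm e.symm)
    ⟨fun M _ => by simp, fun M _ => by simp⟩ ?_ ?_
  · exact fun M hM => ⟨hM.1.submatrix e, fun i hi j hj => hM.2 _ hi _ hj⟩
  · exact fun M hM => ⟨hM.1.submatrix _, fun i hi j hj => hM.2 _ (by simpa) _ (by simpa)⟩

theorem bijOn_submatrix_blockSymm_of_rows (e : κ ≃ ι) (f : δ → κ) (I : Ideal R) (S : Set ι)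
    (M₀ : Matrix ι ι R) :
    BijOn (fun M : Matrix ι ι R => M.submatrix e e)
      {M ∈ blockSymm I S | ∀ d, M (e (f d)) = M₀ (e (f d))}
      {M ∈ blockSymm I (e ⁻¹' S) | ∀ d, M (f d) = M₀.submatrix e e (f d)} := by
  have hbij := bijOn_submatrix_blockSymm e I S
  refine ⟨fun M hM => ⟨hbij.mapsTo hM.1, fun d => ?_⟩, hbij.injOn.mono (sep_subset _ _), ?_⟩
  · ext j
    exact congrFun (hM.2 d) (e j)
  · rintro N ⟨hN, hrow⟩
    obtain ⟨M, hM, rfl⟩ := hbij.surjOn hN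
    refine ⟨M, ⟨hM, fun d => ?_⟩, rfl⟩
    ext j
    simpa using congrFun (hrow d) (e.symm j)

theorem image_row_blockSymm (I : Ideal R) {S : Set ι} {u : ι} (hu : u ∉ S) (T : Set ι) :
    (fun (M : Matrix ι ι R) (j : T) => M u j) '' blockSymm I S = univ := by
  classical
  refine eq_univ_of_forall fun v => ?_
  let w (j : ι) : R := if hj : j ∈ T then v ⟨j, hj⟩ else 0
  refine ⟨of fun i j => if i = u then w j else if j = u then w i else 0, ⟨?_, ?_⟩, ?_⟩
  · refine IsSymm.ext fun i j => ?_
    simp only [of_apply]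
    split_ifs <;> simp_all
  · intro i hi j hj
    simp [ne_of_mem_of_not_mem hi hu, ne_of_mem_of_not_mem hj hu]
  · ext j
    simp [w]

theorem proportion_row_mem_ideal [Finite R] [Finite ι] (I : Ideal R) {S : Set ι} {u : ι}
    (hu : u ∉ S) (T : Set ι) :
    proportion (blockSymm I S : Set (Matrix ι ι R)) {M | ∀ j ∈ T, M u j ∈ I} =
      proportion univ (I : Set R) ^ T.ncard := by
  let row : Matrix ι ι R →+ (T → R) :=
    { toFun M j := M u j
      map_zero' := rfl
      map_add' _ _ := rfl }
  have himage : ((blockSymm I S).map row : Set (T → R)) = univ := image_row_blockSymm I hu T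
  have hpre : {M : Matrix ι ι R | ∀ j ∈ T, M u j ∈ I} = row ⁻¹' {v | ∀ j, v j ∈ I} := by
    ext M
    simp only [mem_preimage, mem_ofPred_eq, Subtype.forall]
    rfl
  have hcard : {v : T → R | ∀ j, v j ∈ I}.ncard = Nat.card I ^ T.ncard := by
    have e : {v : T → R | ∀ j, v j ∈ I} ≃ (T → I) :=
      Equiv.subtypePiEquivPi (p := fun _ a => a ∈ I)
    rw [← Nat.card_coe_set_eq, Nat.card_congr e, Nat.card_fun, Nat.card_coe_set_eq]
  rw [hpre, proportion_preimage, himage, proportion, proportion, univ_inter, univ_inter, hcard,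
    ncard_univ, ncard_univ, Nat.card_fun, ← Nat.card_coe_set_eq (I : Set R), div_pow]
  push_cast
  rfl

theorem coe_blockSymm_insert (I : Ideal R) (S : Set ι) (u : ι) :
    (blockSymm I (insert u S) : Set (Matrix ι ι R)) =
      ↑(blockSymm I S) ∩ {M | ∀ j ∈ insert u S, M u j ∈ I} := by
  ext M
  constructor
  · exact fun hM => ⟨⟨hM.1, fun i hi j hj => hM.2 i (.inr hi) j (.inr hj)⟩,
      hM.2 u (mem_insert u S)⟩
  · rintro ⟨⟨hsymm, hS⟩, hu⟩
    refine ⟨hsymm, ?_⟩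
    rintro i (rfl | hi) j (rfl | hj)
    · exact hu _ (mem_insert _ S)
    · exact hu _ (.inr hj)
    · exact hsymm.apply i j ▸ hu _ (.inr hi)
    · exact hS i hi j hj

theorem bijOn_fromBlocks_blockSymm {I : Ideal R} {S : Set (δ ⊕ κ)}
    {M₀ : Matrix (δ ⊕ κ) (δ ⊕ κ) R} (hM₀ : M₀ ∈ blockSymm I S) {E : Matrix κ κ R}
    (hE : E ∈ blockSymm I (Sum.inr ⁻¹' S)) :
    BijOn (fun N => fromBlocks M₀.toBlocks₁₁ M₀.toBlocks₁₂ M₀.toBlocks₂₁ (N + E))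
      (blockSymm I (Sum.inr ⁻¹' S)) {M ∈ blockSymm I S | ∀ d, M (.inl d) = M₀ (.inl d)} := by
  refine InvOn.bijOn (f' := fun M => M.toBlocks₂₂ - E) ⟨fun N _ => by simp, ?_⟩ ?_ ?_
  · rintro M ⟨hM, hrow⟩
    have h₁₁ : M₀.toBlocks₁₁ = M.toBlocks₁₁ := by
      ext i j
      exact congrFun (hrow i).symm _
    have h₁₂ : M₀.toBlocks₁₂ = M.toBlocks₁₂ := by
      ext i j
      exact congrFun (hrow i).symm _
    have h₂₁ : M₀.toBlocks₂₁ = M.toBlocks₂₁ := by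
      ext i j
      simp only [toBlocks₂₁, of_apply]
      rw [← hM₀.1.apply, ← hM.1.apply, hrow]
    simp only [sub_add_cancel, h₁₁, h₁₂, h₂₁, fromBlocks_toBlocks]
  · intro N hN
    have hNE := add_mem hN hE
    refine ⟨⟨(hM₀.1.submatrix Sum.inl).fromBlocks ?_ hNE.1, ?_⟩, fun d => ?_⟩
    · ext i j
      exact hM₀.1.apply _ _
    · rintro (i | i) hi (j | j) hj
      · exact hM₀.2 _ hi _ hj
      · exact hM₀.2 _ hi _ hj
      · exact hM₀.2 _ hi _ hj
      · exact hNE.2 _ hi _ hj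
    · ext (j | j) <;> rfl
  · exact fun M hM => sub_mem
      ⟨hM.1.1.submatrix Sum.inr, fun i hi j hj => hM.1.2 _ hi _ hj⟩ hE

end BlockSymm

section DetDensity

variable {R ι κ δ : Type*} [CommRing R] [Fintype ι] [DecidableEq ι] [Fintype κ] [DecidableEq κ]

/-- The proportion of matrices with nonzero determinant among the symmetric matrices whose entries
with both indices in `S` lie in `I`. -/
noncomputable def detDensity (I : Ideal R) (S : Set ι) : ℝ :=
  proportion (blockSymm I S : Set (Matrix ι ι R)) {M | M.det ≠ 0}

theorem detDensity_preimage_equiv (e : κ ≃ ι) (I : Ideal R) (S : Set ι) :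
    detDensity I (e ⁻¹' S) = detDensity I S :=
  (proportion_eq_of_bijOn (bijOn_submatrix_blockSymm e I S) fun M _ => by simp).symm

/-- The determinant density for `r` indices inside the block with entries in `I` and `n` indices
outside of it. -/
noncomputable def blockDensity (I : Ideal R) (n r : ℕ) : ℝ :=
  detDensity I (range (Sum.inl : Fin r → Fin r ⊕ Fin n))

theorem detDensity_eq_blockDensity (I : Ideal R) {S : Set ι} {n r : ℕ} (hS : S.ncard = r)
    (hι : Nat.card ι = r + n) : detDensity I S = blockDensity I n r := by
  classical
  have hSc : Nat.card ↥Sᶜ = n := by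
    have := ncard_add_ncard_compl S
    rw [Nat.card_coe_set_eq]
    omega
  let eS : Fin r ≃ S := (Finite.equivFinOfCardEq hS).symm
  let e : Fin r ⊕ Fin n ≃ ι :=
    (eS.sumCongr (Finite.equivFinOfCardEq hSc).symm).trans (Equiv.Set.sumCompl S)
  have he : e ⁻¹' S = range Sum.inl := by
    ext (i | i)
    · simp [e]
    · have hi : e (.inr i) ∉ S := ((Finite.equivFinOfCardEq hSc).symm i).2
      simpa using hi
  rw [blockDensity, ← he, detDensity_preimage_equiv]

variable [Fintype δ] [DecidableEq δ]

-- Once the rows of an invertible block are fixed, the Schur complement of that block runs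
-- bijectively over `blockSymm` on the remaining indices.
theorem proportion_det_ne_zero_of_rows_inl {I : Ideal R} {S : Set (δ ⊕ κ)}
    {M₀ : Matrix (δ ⊕ κ) (δ ⊕ κ) R} (hM₀ : M₀ ∈ blockSymm I S) (hdet : IsUnit M₀.toBlocks₁₁.det)
    (hI : ∀ i, .inr i ∈ S → ∀ j, .inr j ∈ S →
      (M₀.toBlocks₂₁ * M₀.toBlocks₁₁⁻¹ * M₀.toBlocks₁₂) i j ∈ I) :
    proportion {M ∈ blockSymm I S | ∀ d, M (.inl d) = M₀ (.inl d)} {M | M.det ≠ 0} =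
      detDensity I (Sum.inr ⁻¹' S) := by
  have hB : M₀.toBlocks₁₂ᵀ = M₀.toBlocks₂₁ := by
    ext i j
    exact hM₀.1.apply _ _
  have hE : M₀.toBlocks₂₁ * M₀.toBlocks₁₁⁻¹ * M₀.toBlocks₁₂ ∈ blockSymm I (Sum.inr ⁻¹' S) := by
    refine ⟨?_, hI⟩
    have hD : M₀.toBlocks₁₁⁻¹ᵀ = M₀.toBlocks₁₁⁻¹ := (hM₀.1.submatrix Sum.inl).inv
    rw [IsSymm, transpose_mul, transpose_mul, hD, ← hB, transpose_transpose, Matrix.mul_assoc]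
  have := M₀.toBlocks₁₁.invertibleOfIsUnitDet hdet
  refine (proportion_eq_of_bijOn (bijOn_fromBlocks_blockSymm hM₀ hE) fun N _ => ?_).symm
  rw [mem_ofPred_eq, mem_ofPred_eq, det_fromBlocks₁₁, invOf_eq_nonsing_inv, add_sub_cancel_right,
    Ne, hdet.mul_right_eq_zero]

theorem proportion_det_ne_zero_of_rows {f : δ → ι} (hf : f.Injective) {I : Ideal R} {S : Set ι}
    {M₀ : Matrix ι ι R} (hM₀ : M₀ ∈ blockSymm I S) (hdet : IsUnit (M₀.submatrix f f).det)
    (hI : ∀ i ∈ S, ∀ j ∈ S,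
      (M₀.submatrix id f * (M₀.submatrix f f)⁻¹ * M₀.submatrix f id) i j ∈ I)
    {n r : ℕ} (hr : (S \ range f).ncard = r) (hn : Nat.card ι = r + n + Nat.card δ) :
    proportion {M ∈ blockSymm I S | ∀ d, M (f d) = M₀ (f d)} {M | M.det ≠ 0} =
      blockDensity I n r := by
  classical
  let e : δ ⊕ ↥(range f)ᶜ ≃ ι :=
    ((Equiv.ofInjective f hf).sumCongr (.refl _)).trans (Equiv.Set.sumCompl (range f))
  have hbij : BijOn (fun M : Matrix ι ι R => M.submatrix e e)
      {M ∈ blockSymm I S | ∀ d, M (f d) = M₀ (f d)} _ :=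
    bijOn_submatrix_blockSymm_of_rows e Sum.inl I S M₀
  rw [proportion_eq_of_bijOn (t' := {M | M.det ≠ 0}) hbij fun M _ => by simp,
    proportion_det_ne_zero_of_rows_inl ((bijOn_submatrix_blockSymm e I S).mapsTo hM₀) hdet
      fun i hi j hj => hI _ hi _ hj]
  apply detDensity_eq_blockDensity
  · rw [← hr, ← ncard_image_of_injective _ Subtype.val_injective, sdiff_eq, inter_comm,
      ← Subtype.image_preimage_coe]
    rfl
  · have := Nat.card_congr e
    rw [Nat.card_sum] at this
    omega

end DetDensity

section Recursion

variable {R ι : Type*} [CommRing R] [Fintype ι] [DecidableEq ι]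

theorem proportion_det_ne_zero_of_row_isUnit {I : Ideal R} {S : Set ι} {u : ι} (hu : u ∉ S)
    {M₀ : Matrix ι ι R} (hM₀ : M₀ ∈ blockSymm I S) (hrow : ∀ j ∈ S, M₀ u j ∈ I)
    (hunit : IsUnit (M₀ u u)) {n r : ℕ} (hr : S.ncard = r) (hn : Nat.card ι = r + n + 1) :
    proportion {M ∈ blockSymm I S | M u = M₀ u} {M | M.det ≠ 0} = blockDensity I n r := by
  have h := proportion_det_ne_zero_of_rows (f := fun _ : Unit => u) (I := I) (S := S) (n := n)
    (r := r) (Function.injective_of_subsingleton _) hM₀ ?_ ?_ ?_ ?_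
  · simpa using h
  · simpa
  · intro i _ j hj
    rw [mul_apply]
    exact I.sum_mem fun _ _ => I.mul_mem_left _ (hrow j hj)
  · simp [hu, hr]
  · rw [hn, Nat.card_unique]

theorem isUnit_det_fin_two_of_notMem {I : Ideal R} (hI : ∀ x ∉ I, IsUnit x) (a : R) {b d : R}
    (hb : b ∉ I) (hd : d ∈ I) : IsUnit !![a, b; b, d].det := by
  rw [det_fin_two_of]
  refine hI _ fun hdet => hb ?_
  have hsq : b * b ∈ I := by simpa using I.sub_mem (I.mul_mem_left a hd) hdet
  exact (I.unit_mul_mem_iff_mem (hI _ hb)).1 hsq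

theorem mul_inv_fin_two_mul_apply_mem {κ δ : Type*} {I : Ideal R} (a b : R) {d : R} (hd : d ∈ I)
    {X : Matrix κ (Fin 2) R} {Y : Matrix (Fin 2) δ R} {i : κ} {j : δ} (hX : X i 1 ∈ I)
    (hY : Y 1 j ∈ I) : (X * !![a, b; b, d]⁻¹ * Y) i j ∈ I := by
  rw [inv_def, adjugate_fin_two_of]
  set w := Ring.inverse (det !![a, b; b, d])
  convert I.add_mem (I.mul_mem_left (w * X i 0 * Y 0 j) hd) (I.add_mem
    (I.mul_mem_left (w * (X i 1 * a - X i 0 * b)) hY)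
    (I.mul_mem_left (-(w * b * Y 0 j)) hX)) using 1
  simp only [mul_apply, Fin.sum_univ_two, Matrix.smul_apply, of_apply, cons_val', cons_val_zero,
    cons_val_one, cons_val_fin_one, smul_eq_mul]
  ring

theorem proportion_det_ne_zero_of_two_rows {I : Ideal R} (hI : ∀ x ∉ I, IsUnit x) {S : Set ι}
    {u k : ι} (hu : u ∉ S) (hk : k ∈ S) {M₀ : Matrix ι ι R} (hM₀ : M₀ ∈ blockSymm I S)
    (huk : M₀ u k ∉ I) {n r : ℕ} (hr : S.ncard = r + 1) (hn : Nat.card ι = r + n + 2) :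
    proportion {M ∈ blockSymm I S | M u = M₀ u ∧ M k = M₀ k} {M | M.det ≠ 0} =
      blockDensity I n r := by
  have hD : M₀.submatrix ![u, k] ![u, k] = !![M₀ u u, M₀ u k; M₀ u k, M₀ k k] := by
    ext i j
    fin_cases i <;> fin_cases j <;> simp [hM₀.1.apply u k]
  have hkk : M₀ k k ∈ I := hM₀.2 k hk k hk
  have h := proportion_det_ne_zero_of_rows (f := ![u, k]) (I := I) (S := S) (n := n) (r := r)
    ?_ hM₀ ?_ ?_ ?_ ?_
  · simpa [Fin.forall_fin_two] using h
  · rw [← List.nodup_ofFn]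
    simpa using (ne_of_mem_of_not_mem hk hu).symm
  · exact hD ▸ isUnit_det_fin_two_of_notMem hI _ huk hkk
  · intro i hi j hj
    rw [hD]
    exact mul_inv_fin_two_mul_apply_mem _ _ hkk (hM₀.2 i hi k hk) (hM₀.2 k hk j hj)
  · rw [range_cons_cons_empty, sdiff_insert_of_notMem hu, ncard_sdiff_singleton_of_mem hk, hr,
      Nat.add_sub_cancel]
  · rw [hn, Nat.card_fin]

variable [Finite R]

theorem proportion_det_ne_zero_of_row_notMem {I : Ideal R} (hI : ∀ x ∉ I, IsUnit x) {S : Set ι}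
    {u : ι} (hu : u ∉ S) {M₀ : Matrix ι ι R} (hM₀ : M₀ ∈ blockSymm I S)
    (hrow : ¬∀ j ∈ S, M₀ u j ∈ I) {n r : ℕ} (hr : S.ncard = r) (hn : Nat.card ι = r + n + 1) :
    proportion {M ∈ blockSymm I S | M u = M₀ u} {M | M.det ≠ 0} = blockDensity I n (r - 1) := by
  push Not at hrow
  obtain ⟨k, hk, huk⟩ := hrow
  have hpos : 0 < r := by
    rw [← hr, ncard_pos]
    exact ⟨k, hk⟩
  refine proportion_eq_of_fibers ⟨M₀, hM₀, rfl⟩ (fun M => M k) ?_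
  rintro N ⟨hN, hNu⟩
  have hfiber : {M ∈ {M ∈ blockSymm I S | M u = M₀ u} | M k = N k} =
      {M ∈ blockSymm I S | M u = N u ∧ M k = N k} := by
    ext M
    rw [hNu]
    exact and_assoc
  rw [hfiber]
  exact proportion_det_ne_zero_of_two_rows hI hu hk hN (hNu ▸ huk) (by omega) (by omega)

-- For `r = 0` the truncated `r - 1` is harmless, since the first coefficient vanishes.
theorem detDensity_eq_add {I : Ideal R} (hI : ∀ x ∉ I, IsUnit x) {q : ℝ}
    (hq : q = proportion univ (I : Set R)) {S : Set ι} {u : ι} (hu : u ∉ S) {n r : ℕ}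
    (hr : S.ncard = r) (hn : Nat.card ι = r + n + 1) :
    detDensity I S = (1 - q ^ r) * blockDensity I n (r - 1) +
      (q ^ r - q ^ (r + 1)) * blockDensity I n r + q ^ (r + 1) * detDensity I (insert u S) := by
  have h := proportion_eq_add_of_fibers (t := {M : Matrix ι ι R | M.det ≠ 0})
    (u := {w : ι → R | ∀ j ∈ S, w j ∈ I}) (v := {w : ι → R | ∀ j ∈ insert u S, w j ∈ I})
    (ZeroMemClass.coe_nonempty (blockSymm I S)) (fun M => M u) (fun w hw j hj => hw j (.inr hj))
    (fun M₀ hM₀ hrow => proportion_det_ne_zero_of_row_notMem hI hu hM₀ hrow hr hn)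
    fun M₀ hM₀ hrow hrow' => proportion_det_ne_zero_of_row_isUnit hu hM₀ hrow
      (hI _ fun huu => hrow' (forall_mem_insert.2 ⟨huu, hrow⟩)) hr hn
  have hpow (T : Set ι) : proportion (blockSymm I S : Set (Matrix ι ι R))
      ((fun M => M u) ⁻¹' {w | ∀ j ∈ T, w j ∈ I}) = q ^ T.ncard :=
    hq ▸ proportion_row_mem_ideal I hu T
  rw [hpow, hpow, ncard_insert_of_notMem hu, hr] at h
  rw [detDensity, h, detDensity, coe_blockSymm_insert]
  rfl

theorem blockDensity_succ {I : Ideal R} (hI : ∀ x ∉ I, IsUnit x) {q : ℝ}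
    (hq : q = proportion univ (I : Set R)) (n r : ℕ) :
    blockDensity I (n + 1) r = (1 - q ^ r) * blockDensity I n (r - 1) +
      (q ^ r - q ^ (r + 1)) * blockDensity I n r + q ^ (r + 1) * blockDensity I n (r + 1) := by
  let S : Set (Fin r ⊕ Fin (n + 1)) := range Sum.inl
  have hu : .inr 0 ∉ S := by simp [S]
  have hS : S.ncard = r := by
    simp [S, ← image_univ, ncard_image_of_injective _ Sum.inl_injective, ncard_univ]
  have hn : Nat.card (Fin r ⊕ Fin (n + 1)) = r + n + 1 := by simp [add_assoc]
  rw [blockDensity, detDensity_eq_add hI hq hu hS hn, detDensity_eq_blockDensity I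
    (S := insert _ S) (n := n) (r := r + 1) (by rw [ncard_insert_of_notMem hu, hS]) (by omega)]

theorem blockDensity_antitone {I : Ideal R} (hI : ∀ x ∉ I, IsUnit x)
    (h0 : Antitone (blockDensity I 0)) (n : ℕ) : Antitone (blockDensity I n) := by
  obtain ⟨q, hq⟩ : ∃ q, q = proportion univ (I : Set R) := ⟨_, rfl⟩
  have hq0 : 0 ≤ q := hq ▸ proportion_nonneg _ _
  have hq1 : q ≤ 1 := hq ▸ proportion_le_one _ _
  induction n with
  | zero => exact h0
  | succ n ih =>
    refine antitone_nat_of_succ_le fun r => ?_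
    have hone : q ^ r ≤ 1 := pow_le_one₀ hq0 hq1
    have hlow : blockDensity I n r ≤ blockDensity I n (r - 1) := ih (Nat.sub_le r 1)
    have htop : blockDensity I n (r + 2) ≤ blockDensity I n (r + 1) := ih (Nat.le_succ (r + 1))
    have hdiff : blockDensity I (n + 1) r - blockDensity I (n + 1) (r + 1) =
        (1 - q ^ r) * (blockDensity I n (r - 1) - blockDensity I n r) +
          q ^ (r + 2) * (blockDensity I n (r + 1) - blockDensity I n (r + 2)) := by
      rw [blockDensity_succ hI hq, blockDensity_succ hI hq, Nat.add_sub_cancel]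
      ring
    rw [← sub_nonneg, hdiff]
    exact add_nonneg (mul_nonneg (sub_nonneg.2 hone) (sub_nonneg.2 hlow))
      (mul_nonneg (pow_nonneg hq0 _) (sub_nonneg.2 htop))

theorem blockDensity_succ_zero_le {I : Ideal R} (hI : ∀ x ∉ I, IsUnit x)
    (h0 : Antitone (blockDensity I 0)) (n : ℕ) : blockDensity I (n + 1) 0 ≤ blockDensity I n 0 := by
  have hanti : blockDensity I n 1 ≤ blockDensity I n 0 :=
    blockDensity_antitone hI h0 n (Nat.zero_le 1)
  rw [blockDensity_succ hI rfl, zero_add, pow_zero, sub_self, zero_mul, zero_add]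
  nlinarith [proportion_nonneg univ (I : Set R)]

end Recursion

section SymmDetDensity

/-- The proportion of matrices with nonzero determinant among the symmetric `n × n` matrices. -/
noncomputable def symmDetDensity (R : Type*) [CommRing R] (n : ℕ) : ℝ :=
  proportion {A : Matrix (Fin n) (Fin n) R | A.IsSymm} {A | A.det ≠ 0}

variable {R S : Type*} [CommRing R] [CommRing S]

theorem blockDensity_zero_right (I : Ideal R) (n : ℕ) :
    blockDensity I n 0 = symmDetDensity R n := by
  rw [symmDetDensity, ← coe_blockSymm_empty I, ← detDensity,
    detDensity_eq_blockDensity I (ncard_empty _) (by rw [Nat.card_fin, zero_add])]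

theorem symmDetDensity_of_subsingleton [Subsingleton R] (n : ℕ) : symmDetDensity R n = 0 := by
  simp [symmDetDensity, proportion, Subsingleton.elim _ (0 : R)]

theorem image_map_isSymm {ι α β : Type*} (g : α → β) :
    (fun A : Matrix ι ι α => A.map g) '' {A | A.IsSymm} =
      {A | A.IsSymm ∧ ∀ i j, A i j ∈ range g} := by
  apply Subset.antisymm
  · rintro _ ⟨A, hA, rfl⟩
    exact ⟨hA.map g, fun i j => mem_range_self (A i j)⟩
  · rintro A ⟨hA, hrange⟩
    refine ⟨of fun i j => rangeSplitting g ⟨A i j, hrange i j⟩, ?_, ?_⟩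
    · exact IsSymm.ext fun i j => congrArg (rangeSplitting g) (Subtype.ext (hA.apply i j))
    · ext i j
      exact apply_rangeSplitting g _

theorem isUnit_of_notMem_span_map {f : S →+* R} (hf : Function.Surjective f) {a : S}
    (ha : ∀ x ∉ Ideal.span {a}, IsUnit x) : ∀ x ∉ Ideal.span {f a}, IsUnit x := by
  intro x hx
  obtain ⟨y, rfl⟩ := hf x
  refine (ha y fun hy => hx ?_).map f
  rw [Ideal.mem_span_singleton] at hy ⊢
  exact map_dvd f hy

variable [Finite S]

theorem proportion_isSymm_map [Finite R] {ι : Type*} [Finite ι] (φ : S →+ R)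
    (t : Set (Matrix ι ι R)) :
    proportion {A : Matrix ι ι S | A.IsSymm} {A | A.map φ ∈ t} =
      proportion {A | A.IsSymm ∧ ∀ i j, A i j ∈ range φ} t := by
  have h := proportion_preimage (blockSymm (⊥ : Ideal S) (∅ : Set ι)) φ.mapMatrix t
  have himage : ↑((blockSymm (⊥ : Ideal S) (∅ : Set ι)).map φ.mapMatrix) =
      {A : Matrix ι ι R | A.IsSymm ∧ ∀ i j, A i j ∈ range φ} := by
    rw [← image_map_isSymm, ← coe_blockSymm_empty ⊥]
    rfl
  rw [himage, coe_blockSymm_empty] at h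
  exact h

theorem proportion_map_det_ne_zero {f : S →+* R} (hf : Function.Surjective f) (n : ℕ) :
    proportion {A : Matrix (Fin n) (Fin n) S | A.IsSymm} {A | f A.det ≠ 0} =
      symmDetDensity R n := by
  have := Finite.of_surjective f hf
  have h := proportion_isSymm_map f.toAddMonoidHom {A : Matrix (Fin n) (Fin n) R | A.det ≠ 0}
  simpa [symmDetDensity, f.map_det, hf.range_eq] using h

theorem symmDetDensity_le_of_surjective {f : S →+* R} (hf : Function.Surjective f) (n : ℕ) :
    symmDetDensity R n ≤ symmDetDensity S n := by
  rw [← proportion_map_det_ne_zero hf]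
  exact proportion_mono _ fun A hA h0 => hA (h0 ▸ map_zero f)

-- A matrix with all entries in `(a)` is `a • A`, of determinant `a ^ r * det A`; this is nonzero
-- if and only if `det A` is nonzero modulo the annihilator of `a ^ r`.
theorem blockDensity_span_zero_left [Finite R] (a : R) (r : ℕ) :
    blockDensity (Ideal.span {a}) 0 r = symmDetDensity (R ⧸ Ideal.torsionOf R R (a ^ r)) r := by
  have hspan : {A : Matrix (Fin r) (Fin r) R |
      A.IsSymm ∧ ∀ i j, A i j ∈ range (AddMonoidHom.mulLeft a)} =
      ↑(blockSymm (Ideal.span {a}) (univ : Set (Fin r))) := by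
    ext A
    simp [blockSymm, Ideal.mem_span_singleton', Set.mem_range, mul_comm]
  rw [← detDensity_eq_blockDensity (S := (univ : Set (Fin r))) _ (by simp [ncard_univ]) (by simp),
    detDensity, ← hspan, ← proportion_isSymm_map,
    ← proportion_map_det_ne_zero Ideal.Quotient.mk_surjective]
  congr 1
  ext A
  have hdet : (A.map (AddMonoidHom.mulLeft a)).det = a ^ r * A.det := by
    rw [show A.map (AddMonoidHom.mulLeft a) = a • A from rfl, det_smul, Fintype.card_fin]
  rw [mem_ofPred_eq, mem_ofPred_eq, mem_ofPred_eq, hdet, Ne, Ne, Ideal.Quotient.eq_zero_iff_mem,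
    Ideal.mem_torsionOf_iff, smul_eq_mul, mul_comm]

theorem symmDetDensity_succ_le [Finite R] {a : R} (ha : IsNilpotent a)
    (hunit : ∀ x ∉ Ideal.span {a}, IsUnit x) (n : ℕ) :
    symmDetDensity R (n + 1) ≤ symmDetDensity R n := by
  obtain ⟨k, hk⟩ := ha
  induction k generalizing R n with
  | zero =>
    have : Subsingleton R := subsingleton_of_zero_eq_one (by simpa using hk.symm)
    simp only [symmDetDensity_of_subsingleton, le_refl]
  | succ k ih =>
    have h0 : Antitone (blockDensity (Ideal.span {a}) 0) := by
      refine antitone_nat_of_succ_le fun r => ?_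
      let J := Ideal.torsionOf R R (a ^ r)
      let J' := Ideal.torsionOf R R (a ^ (r + 1))
      have : Finite (R ⧸ J) := .of_surjective _ Ideal.Quotient.mk_surjective
      have : Finite (R ⧸ J') := .of_surjective _ Ideal.Quotient.mk_surjective
      have hJ : J ≤ J' := fun x hx => by
        rw [Ideal.mem_torsionOf_iff] at hx ⊢
        rw [pow_succ, ← smul_mul_assoc, hx, zero_mul]
      have hpow : Ideal.Quotient.mk J' a ^ k = 0 := by
        rw [← map_pow, Ideal.Quotient.eq_zero_iff_mem, Ideal.mem_torsionOf_iff, smul_eq_mul,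
          ← pow_add, ← add_assoc, add_right_comm, pow_add, hk, zero_mul]
      calc blockDensity (Ideal.span {a}) 0 (r + 1)
          = symmDetDensity (R ⧸ J') (r + 1) := blockDensity_span_zero_left a (r + 1)
        _ ≤ symmDetDensity (R ⧸ J') r :=
          ih (isUnit_of_notMem_span_map Ideal.Quotient.mk_surjective hunit) r hpow
        _ ≤ symmDetDensity (R ⧸ J) r :=
          symmDetDensity_le_of_surjective (Ideal.Quotient.factor_surjective hJ) r
        _ = blockDensity (Ideal.span {a}) 0 r := (blockDensity_span_zero_left a r).symm
    simpa only [blockDensity_zero_right] using blockDensity_succ_zero_le hunit h0 n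

end SymmDetDensity

section PrimePower

theorem ncard_isSymm (ι α : Type*) [Finite ι] :
    {A : Matrix ι ι α | A.IsSymm}.ncard = Nat.card α ^ (Nat.card ι * (Nat.card ι + 1) / 2) := by
  have := Fintype.ofFinite ι
  have e : {A : Matrix ι ι α | A.IsSymm} ≃ (Sym2 ι → α) :=
    (Equiv.subtypeEquivRight fun A : Matrix ι ι α =>
      ⟨fun hA i j => hA.apply j i, fun hA => IsSymm.ext fun i j => hA j i⟩).trans Sym2.lift
  rw [← Nat.card_coe_set_eq, Nat.card_congr e, Nat.card_fun, Nat.card_eq_fintype_card (α := Sym2 ι),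
    Sym2.card, Nat.choose_two_right, Nat.card_eq_fintype_card (α := ι), Nat.add_sub_cancel,
    mul_comm (_ + 1)]

theorem Psym_eq_symmDetDensity (n m : ℕ) : Psym n m = symmDetDensity (ZMod m) n := by
  rw [symmDetDensity, proportion, ncard_isSymm, Nat.card_zmod, Nat.card_fin, Nat.cast_pow]
  rfl

theorem isUnit_of_notMem_span_prime {p : ℕ} (hp : p.Prime) (μ : ℕ) :
    ∀ x ∉ Ideal.span {(p : ZMod (p ^ μ))}, IsUnit x := by
  have : NeZero p := ⟨hp.ne_zero⟩
  intro x hx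
  obtain ⟨v, rfl⟩ := ZMod.natCast_zmod_surjective x
  rw [ZMod.isUnit_iff_coprime]
  refine ((hp.coprime_iff_not_dvd.2 fun hpv => hx ?_).symm).pow_right μ
  exact Ideal.mem_span_singleton.2 (Nat.cast_dvd_cast hpv)

end PrimePower

theorem Psym_monotone_general {R S : Type*} [CommRing R] [CommRing S] [Finite S]
    {a : R} (ha : IsNilpotent a) (hunit : ∀ x ∉ Ideal.span {a}, IsUnit x) {f : S →+* R}
    (hf : Function.Surjective f) (n : ℕ) :
    symmDetDensity R (n + 1) ≤ symmDetDensity R n ∧ symmDetDensity R n ≤ symmDetDensity S n :=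
  have : Finite R := .of_surjective f hf
  ⟨symmDetDensity_succ_le ha hunit n, symmDetDensity_le_of_surjective hf n⟩

theorem Psym_monotone (p : ℕ) (hp : p.Prime) (n μ : ℕ) :
    Psym (n + 1) (p ^ μ) ≤ Psym n (p ^ μ) ∧ Psym n (p ^ μ) ≤ Psym n (p ^ (μ + 1)) := by
  have : NeZero p := ⟨hp.ne_zero⟩
  have hnil : IsNilpotent (p : ZMod (p ^ μ)) :=
    ⟨μ, by rw [← Nat.cast_pow, ZMod.natCast_self]⟩
  have hsurj : Function.Surjective (ZMod.castHom (pow_dvd_pow p μ.le_succ) (ZMod (p ^ μ))) :=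
    ZMod.castHom_surjective _
  simpa only [Psym_eq_symmDetDensity] using
    Psym_monotone_general hnil (isUnit_of_notMem_span_prime hp μ) hsurj n
end
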